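/- arXiv:1210.4715 — 3 statements merged into one kernel-verified Lean document; each statement's English description precedes it below -/
import Mathlib

section
/- Let X be a separable Banach space, Y a Banach space, G ⊂ X open, and f : G → Y a Borel measurable mapping whose restriction to every line meeting G is continuous. Then the set of all points x ∈ G at which f is Gâteaux differentiable but not Lipschitz at x is σ-directionally porous. -/
open Filter Metric Set Topology MeasureTheory

section CommonDefs
variable {X Y : Type*}

/-- `f` is (pointwise) Lipschitz at `x`:
`limsup_{y→x} ‖f y - f x‖/‖y - x‖ < ∞`. -/
def LipschitzAtPt [NormedAddCommGroup X] [NormedAddCommGroup Y]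
    (f : X → Y) (x : X) : Prop :=
  ∃ K > (0:ℝ), ∃ δ > (0:ℝ), ∀ y ∈ ball x δ, ‖f y - f x‖ ≤ K * ‖y - x‖

/-- The (two-sided) Hadamard directional derivative of `f` at `x` in direction `v` is `y`:
`(f (x + t z) - f x)/t → y` as `z → v`, `t → 0`, `t ≠ 0`. -/
def HadamardDerivAt [NormedAddCommGroup X] [NormedSpace ℝ X]
    [NormedAddCommGroup Y] [NormedSpace ℝ Y]
    (f : X → Y) (x v : X) (y : Y) : Prop :=
  Tendsto (fun p : ℝ × X => p.1⁻¹ • (f (x + p.1 • p.2) - f x))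
    ((𝓝[≠] (0:ℝ)) ×ˢ 𝓝 v) (𝓝 y)

/-- The one-sided Hadamard directional derivative of `f` at `x` in direction `v` is `y`:
`(f (x + t z) - f x)/t → y` as `z → v`, `t → 0+`. -/
def HadamardPlusDerivAt [NormedAddCommGroup X] [NormedSpace ℝ X]
    [NormedAddCommGroup Y] [NormedSpace ℝ Y]
    (f : X → Y) (x v : X) (y : Y) : Prop :=
  Tendsto (fun p : ℝ × X => p.1⁻¹ • (f (x + p.1 • p.2) - f x))
    ((𝓝[>] (0:ℝ)) ×ˢ 𝓝 v) (𝓝 y)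

/-- `f` is Gâteaux differentiable at `x` with derivative the continuous linear map `L`. -/
def GateauxDiffAt [NormedAddCommGroup X] [NormedSpace ℝ X]
    [NormedAddCommGroup Y] [NormedSpace ℝ Y]
    (f : X → Y) (x : X) (L : X →L[ℝ] Y) : Prop :=
  ∀ v : X, Tendsto (fun t : ℝ => t⁻¹ • (f (x + t • v) - f x)) (𝓝[≠] (0:ℝ)) (𝓝 (L v))

/-- `f` is Hadamard differentiable at `x` with derivative the continuous linear map `L`. -/
def HadamardDiffAt [NormedAddCommGroup X] [NormedSpace ℝ X]
    [NormedAddCommGroup Y] [NormedSpace ℝ Y]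
    (f : X → Y) (x : X) (L : X →L[ℝ] Y) : Prop :=
  ∀ v : X, HadamardDerivAt f x v (L v)

/-- `A` is directionally porous at `x`. -/
def DirPorousAt [NormedAddCommGroup X] [NormedSpace ℝ X] (A : Set X) (x : X) : Prop :=
  ∃ v : X, v ≠ 0 ∧ ∃ p > (0:ℝ), ∃ t : ℕ → ℝ, (∀ n, 0 < t n) ∧
    Tendsto t atTop (𝓝 (0:ℝ)) ∧ ∀ n, ball (x + t n • v) (p * t n) ∩ A = ∅

/-- `A` is a countable union of directionally porous sets. -/
def SigmaDirPorous [NormedAddCommGroup X] [NormedSpace ℝ X] (A : Set X) : Prop :=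
  ∃ S : ℕ → Set X, A = ⋃ n, S n ∧ ∀ n, ∀ x ∈ S n, DirPorousAt (S n) x

/-- `A` is porous at `x`. -/
def PorousAt [NormedAddCommGroup X] (A : Set X) (x : X) : Prop :=
  ∃ p > (0:ℝ), ∃ y : ℕ → X, (∀ n, y n ≠ x) ∧ Tendsto y atTop (𝓝 x) ∧
    ∀ n, ball (y n) (p * ‖y n - x‖) ∩ A = ∅

/-- `A` is a countable union of porous sets. -/
def SigmaPorous [NormedAddCommGroup X] (A : Set X) : Prop :=
  ∃ S : ℕ → Set X, A = ⋃ n, S n ∧ ∀ n, ∀ x ∈ S n, PorousAt (S n) x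

end CommonDefs
/-- The dyadic difference-quotient bound set. -/
def FS14 {X Y : Type*} [NormedAddCommGroup X] [NormedSpace ℝ X]
    [NormedAddCommGroup Y] (f : X → Y) (x : X) (n : ℕ) : Set X :=
  {v | ∀ m ≥ n, ‖f (x + ((1/2:ℝ)^m) • v) - f x‖ ≤ n * (1/2:ℝ)^m}

lemma residual_extend14 {X Y : Type*} [NormedAddCommGroup X] [NormedSpace ℝ X] [CompleteSpace X]
    [NormedAddCommGroup Y]
    (G : Set X) (hG : IsOpen G) (f : X → Y)
    (hline : ∀ a v : X, v ≠ 0 →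
      ContinuousOn (fun t : ℝ => f (a + t • v)) {t : ℝ | a + t • v ∈ G})
    (U : Set X) (hU : IsOpen U) (z : X) (s M : ℝ)
    (hres : {v | v ∈ U → ‖f (z + s • v) - f z‖ ≤ M} ∈ residual X)
    (v : X) (hv : v ∈ U) (hz : z + s • v ∈ G) : ‖f (z + s • v) - f z‖ ≤ M := by
  set τ : ℕ → ℝ := fun j => 1 / ((j:ℝ) + 1) with hτ
  have hτ0 : Tendsto τ atTop (𝓝 0) := tendsto_one_div_add_atTop_nhds_zero_nat
  have hE : ∀ j, {u : X | v + τ j • u ∈ U → ‖f (z + s • (v + τ j • u)) - f z‖ ≤ M} ∈ residual X := by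
    intro j
    have hne : τ j ≠ 0 := by simp only [hτ]; positivity
    let h : X ≃ₜ X := (Homeomorph.smulOfNeZero (τ j) hne).trans (Homeomorph.addLeft v)
    have := tendsto_residual_of_isOpenMap h.continuous h.isOpenMap hres
    exact this
  have hI := countable_iInter_mem.2 hE
  obtain ⟨u, hu⟩ := (dense_of_mem_residual hI).nonempty
  rw [mem_iInter] at hu
  have hc1 : Tendsto (fun j => v + τ j • u) atTop (𝓝 v) := by
    have := (tendsto_const_nhds (x := v)).add (hτ0.smul_const u)
    simpa using this
  have hev : ∀ᶠ j in atTop, v + τ j • u ∈ U := hc1.eventually (hU.mem_nhds hv)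
  have hc2 : Tendsto (fun j => f (z + s • (v + τ j • u))) atTop (𝓝 (f (z + s • v))) := by
    by_cases hu0 : s • u = 0
    · have : ∀ j, z + s • (v + τ j • u) = z + s • v := by
        intro j
        rw [smul_add, smul_comm, hu0]; simp
      simp only [this]
      exact tendsto_const_nhds
    · have hc := hline (z + s • v) (s • u) hu0
      have hopen : IsOpen {t : ℝ | z + s • v + t • (s • u) ∈ G} :=
        hG.preimage (by fun_prop : Continuous fun t : ℝ => z + s • v + t • (s • u))
      have hca := hc.continuousAt (hopen.mem_nhds (show (0:ℝ) ∈ _ by simpa using hz))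
      have h2 := hca.tendsto.comp hτ0
      simp only [zero_smul, add_zero] at h2
      refine h2.congr fun j => ?_
      simp only [Function.comp]
      congr 1
      rw [smul_add, smul_comm s (τ j) u, add_assoc]
  refine le_of_tendsto ((hc2.sub_const (f z)).norm) ?_
  filter_upwards [hev] with j hj
  exact hu j hj

lemma FS14_cover {X Y : Type*} [NormedAddCommGroup X] [NormedSpace ℝ X]
    [NormedAddCommGroup Y] [NormedSpace ℝ Y] (f : X → Y) (x : X) (L : X →L[ℝ] Y)
    (hL : GateauxDiffAt f x L) : ⋃ n, FS14 f x n = univ := by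
  refine eq_univ_of_forall fun v => ?_
  have ht : Tendsto (fun m : ℕ => (1/2:ℝ)^m) atTop (𝓝[≠] 0) := by
    refine tendsto_nhdsWithin_iff.2 ⟨tendsto_pow_atTop_nhds_zero_of_lt_one (by norm_num) (by norm_num), ?_⟩
    exact Eventually.of_forall fun m => by simp
  have h1 := ((hL v).comp ht).norm
  have h2 := h1.eventually (gt_mem_nhds (lt_add_one ‖L v‖))
  obtain ⟨N, hN⟩ := eventually_atTop.1 h2
  obtain ⟨K, hK⟩ := exists_nat_ge (‖L v‖ + 1)
  refine mem_iUnion.2 ⟨max N K, fun m hm => ?_⟩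
  have h3 := hN m (le_trans (le_max_left _ _) hm)
  simp only [Function.comp, norm_smul, norm_inv, norm_pow] at h3
  have hp : (0:ℝ) < (1/2:ℝ)^m := by positivity
  have hn : ‖(1/2:ℝ)‖ = 1/2 := by norm_num
  rw [hn, inv_mul_lt_iff₀ hp] at h3
  have h4 : (K:ℝ) ≤ ((max N K : ℕ) : ℝ) := by exact_mod_cast le_max_right _ _
  nlinarith

/-- Pieces of the decomposition. -/
def SS14 {X Y : Type*} [NormedAddCommGroup X] [NormedSpace ℝ X]
    [NormedAddCommGroup Y] (B : Set X) (f : X → Y) (d : X) (n m : ℕ) : Set X :=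
  {x ∈ B | d ≠ 0 ∧ {v | v ∈ ball d (1/((m:ℝ)+1)) → v ∈ FS14 f x n} ∈ residual X}

lemma SS14_porous {X Y : Type*} [NormedAddCommGroup X] [NormedSpace ℝ X] [CompleteSpace X]
    [NormedAddCommGroup Y]
    (G : Set X) (hG : IsOpen G) (f : X → Y)
    (hline : ∀ a v : X, v ≠ 0 →
      ContinuousOn (fun t : ℝ => f (a + t • v)) {t : ℝ | a + t • v ∈ G})
    (B : Set X) (hB : ∀ x ∈ B, x ∈ G ∧ ¬ LipschitzAtPt f x) (d : X) (n m : ℕ)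
    (x : X) (hx : x ∈ SS14 B f d n m) : DirPorousAt (SS14 B f d n m) x := by
  obtain ⟨hxB, hd, -⟩ := hx
  obtain ⟨hxG, hxL⟩ := hB x hxB
  obtain ⟨r, hr⟩ : ∃ r : ℝ, r = 1/((m:ℝ)+1) := ⟨_, rfl⟩
  have hr0 : 0 < r := by rw [hr]; positivity
  obtain ⟨δ, hδ, hδG⟩ := Metric.isOpen_iff.1 hG x hxG
  have key : ∀ k : ℕ, ∃ s : ℝ, 0 < s ∧ s < 1/((k:ℝ)+1) ∧
      ball (x + s • (-d)) (r/2 * s) ∩ SS14 B f d n m = ∅ := by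
    intro k
    obtain ⟨η, hη⟩ : ∃ η : ℝ, η = min (min (1/((k:ℝ)+1)) ((1/2:ℝ)^n)) 1 := ⟨_, rfl⟩
    have hη0 : 0 < η := by rw [hη]; positivity
    have hη1 : η ≤ 1/((k:ℝ)+1) := by rw [hη]; exact (min_le_left _ _).trans (min_le_left _ _)
    have hη2 : η ≤ (1/2:ℝ)^n := by rw [hη]; exact (min_le_left _ _).trans (min_le_right _ _)
    have hη3 : η ≤ 1 := by rw [hη]; exact min_le_right _ _
    have hyy : ∃ y ∈ ball x (min δ (r/8 * η)), (16 * n / r + 1) * ‖y - x‖ < ‖f y - f x‖ := by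
      by_contra! hcon
      exact hxL ⟨16 * n / r + 1, by positivity, min δ (r/8*η), by positivity, hcon⟩
    obtain ⟨y, hy, hyf⟩ := hyy
    have hyx : 0 < ‖y - x‖ := by
      rw [norm_pos_iff]
      intro h0
      rw [sub_eq_zero] at h0
      subst h0
      simp at hyf
    rw [mem_ball, dist_eq_norm, lt_min_iff] at hy
    have hyG : y ∈ G := hδG (by rw [mem_ball, dist_eq_norm]; exact hy.1)
    have hq : ‖y - x‖ * (4 / r) < η / 2 := by
      rw [← mul_div_assoc, div_lt_iff₀ hr0]; nlinarith [hy.2]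
    obtain ⟨N, hN1, hN2⟩ := exists_nat_pow_near_of_lt_one (x := ‖y - x‖ * (4 / r)) (y := (1/2:ℝ))
      (by positivity) (by linarith) (by norm_num) (by norm_num)
    obtain ⟨s, hs⟩ : ∃ s : ℝ, s = (1/2:ℝ)^N := ⟨_, rfl⟩
    have hs0 : 0 < s := by rw [hs]; positivity
    rw [pow_succ, ← hs] at hN1
    rw [← hs] at hN2
    have hsη : s < η := by linarith
    have hNn : n ≤ N := by
      by_contra! hlt
      have := pow_le_pow_of_le_one (a := (1/2:ℝ)) (by norm_num) (by norm_num) hlt.le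
      rw [← hs] at this
      linarith
    refine ⟨s, hs0, by linarith, ?_⟩
    rw [eq_empty_iff_forall_notMem]
    rintro z ⟨hz, -, -, hzr⟩
    rw [← hr] at hzr
    rw [mem_ball, dist_eq_norm] at hz
    have hres : {v | v ∈ ball d r → ‖f (z + s • v) - f z‖ ≤ n * s} ∈ residual X := by
      refine mem_of_superset hzr fun v hv hvb => ?_
      have := hv hvb N hNn
      rwa [← hs] at this
    have gen : ∀ w ∈ G, ‖w - x‖ ≤ ‖y - x‖ → ‖f w - f z‖ ≤ n * s := by
      intro w hw hwx
      have hw' : z + s • (s⁻¹ • (w - z)) = w := by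
        rw [smul_smul, mul_inv_cancel₀ hs0.ne', one_smul]; abel
      have := residual_extend14 G hG f hline (ball d r) isOpen_ball z s (n * s) hres
        (s⁻¹ • (w - z)) ?_ (by rw [hw']; exact hw)
      · rwa [hw'] at this
      · rw [mem_ball, dist_eq_norm]
        have e : s⁻¹ • (w - z) - d = s⁻¹ • ((w - x) - (z - (x + s • (-d)))) := by
          have : d = s⁻¹ • (s • d) := by rw [smul_smul, inv_mul_cancel₀ hs0.ne', one_smul]
          nth_rewrite 1 [this]
          rw [← smul_sub]
          congr 1
          rw [smul_neg]; abel
        rw [e, norm_smul, norm_inv, Real.norm_of_nonneg hs0.le, inv_mul_lt_iff₀ hs0]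
        have h5 := norm_sub_le (w - x) (z - (x + s • (-d)))
        have h6 : ‖y - x‖ * 4 ≤ s * r := by
          rw [← mul_div_assoc, div_le_iff₀ hr0] at hN2; exact hN2
        nlinarith [mul_pos hs0 hr0]
    have g1 := gen y hyG le_rfl
    have g2 := gen x hxG (by simp)
    have g3 : ‖f y - f x‖ ≤ 2 * (n * s) := by
      have : f y - f x = (f y - f z) - (f x - f z) := by abel
      rw [this]
      linarith [norm_sub_le (f y - f z) (f x - f z)]
    have g4 : s ≤ 2 * (‖y - x‖ * (4 / r)) := by linarith
    have g5 : (n:ℝ) * s ≤ n * (2 * (‖y - x‖ * (4 / r))) := by gcongr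
    have g6 : (16 * n / r + 1) * ‖y - x‖ = 2 * (n * (2 * (‖y - x‖ * (4 / r)))) + ‖y - x‖ := by ring
    linarith
  choose t ht0 ht1 ht2 using key
  refine ⟨-d, neg_ne_zero.2 hd, r/2, by positivity, t, ht0, ?_, ht2⟩
  exact squeeze_zero (fun k => (ht0 k).le) (fun k => (ht1 k).le)
    tendsto_one_div_add_atTop_nhds_zero_nat

lemma FS14_measurable {X Y : Type*} [NormedAddCommGroup X] [NormedSpace ℝ X]
    [MeasurableSpace X] [BorelSpace X] [NormedAddCommGroup Y]
    [MeasurableSpace Y] [BorelSpace Y] (f : X → Y) (hf : Measurable f) (x : X) (n : ℕ) :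
    MeasurableSet (FS14 f x n) := by
  have : FS14 f x n = ⋂ m : ℕ, ⋂ _ : m ≥ n,
      (fun v : X => f (x + ((1/2:ℝ)^m) • v)) ⁻¹' closedBall (f x) (n * (1/2:ℝ)^m) := by
    ext v
    simp [FS14, dist_eq_norm]
  rw [this]
  refine MeasurableSet.iInter fun m => MeasurableSet.iInter fun _ => ?_
  have hc : Continuous fun v : X => x + ((1/2:ℝ)^m) • v := by fun_prop
  exact (hf.comp hc.measurable) isClosed_closedBall.measurableSet

theorem stmt14 {X Y : Type*} [NormedAddCommGroup X] [NormedSpace ℝ X] [CompleteSpace X]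
    [TopologicalSpace.SeparableSpace X]
    [MeasurableSpace X] [BorelSpace X]
    [NormedAddCommGroup Y] [NormedSpace ℝ Y] [CompleteSpace Y]
    [MeasurableSpace Y] [BorelSpace Y]
    (G : Set X) (hG : IsOpen G) (f : X → Y) (hmeas : Measurable f)
    (hline : ∀ a v : X, v ≠ 0 →
      ContinuousOn (fun t : ℝ => f (a + t • v)) {t : ℝ | a + t • v ∈ G}) :
    SigmaDirPorous {x ∈ G | (∃ L : X →L[ℝ] Y, GateauxDiffAt f x L) ∧
      ¬ LipschitzAtPt f x} := by
  classical
  obtain ⟨B, hBdef⟩ : ∃ B : Set X, B = {x ∈ G | (∃ L : X →L[ℝ] Y, GateauxDiffAt f x L) ∧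
      ¬ LipschitzAtPt f x} := ⟨_, rfl⟩
  rw [← hBdef]
  have hB : ∀ x ∈ B, x ∈ G ∧ ¬ LipschitzAtPt f x := by
    intro x hx
    rw [hBdef] at hx
    exact ⟨hx.1, hx.2.2⟩
  let e := (Denumerable.eqv (ℕ × ℕ × ℕ)).symm
  let dd : ℕ → X := TopologicalSpace.denseSeq X
  let T : ℕ × ℕ × ℕ → Set X := fun q => SS14 B f (dd q.1) q.2.1 q.2.2
  refine ⟨fun k => T (e k), ?_, fun k x hx => SS14_porous G hG f hline B hB _ _ _ x hx⟩
  rw [e.surjective.iUnion_comp T]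
  refine Subset.antisymm (fun x hx => ?_) (iUnion_subset fun q x hx => hx.1)
  obtain ⟨hxG, hxL⟩ := hB x hx
  obtain ⟨L, hL⟩ : ∃ L : X →L[ℝ] Y, GateauxDiffAt f x L := by
    rw [hBdef] at hx; exact hx.2.1
  have hnt : Nontrivial X := by
    by_contra hcon
    rw [not_nontrivial_iff_subsingleton] at hcon
    refine hxL ⟨1, one_pos, 1, one_pos, fun y _ => ?_⟩
    rw [Subsingleton.elim y x]; simp
  have hcov := FS14_cover f x L hL
  obtain ⟨n, hn⟩ : ∃ n, ¬ IsMeagre (FS14 f x n) := by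
    by_contra! hcon
    have h1 : IsMeagre (⋃ n, FS14 f x n) := isMeagre_iUnion hcon
    rw [hcov, IsMeagre, compl_univ] at h1
    exact (dense_of_mem_residual h1).nonempty.ne_empty rfl
  obtain ⟨U, hU, hUe⟩ :=
    (FS14_measurable f hmeas x n).baireMeasurableSet.residualEq_isOpen
  have hUne : U.Nonempty := by
    rw [nonempty_iff_ne_empty]
    rintro rfl
    apply hn
    rw [IsMeagre]
    filter_upwards [hUe] with v hv
    intro hvF
    exact (Eq.mp hv hvF : v ∈ (∅ : Set X))
  have hne : (U ∩ {0}ᶜ).Nonempty := by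
    haveI : NeBot (𝓝[≠] (0:X)) := Module.punctured_nhds_neBot ℝ X 0
    exact (dense_compl_singleton (0:X)).inter_open_nonempty U hU hUne
  have hO : IsOpen (U ∩ {0}ᶜ) := hU.inter isOpen_compl_singleton
  obtain ⟨i, hi⟩ := (TopologicalSpace.denseRange_denseSeq X).exists_mem_open hO hne
  obtain ⟨ε, hε, hεU⟩ := Metric.isOpen_iff.1 hU _ hi.1
  obtain ⟨m, hm⟩ := exists_nat_one_div_lt hε
  refine mem_iUnion.2 ⟨(i, n, m), hx, hi.2, ?_⟩
  filter_upwards [hUe] with v hv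
  intro hvb
  exact Eq.mpr hv (hεU (ball_subset_ball hm.le hvb))
end

section
/- Let X be a separable Banach space, Y a Banach space, G ⊂ X open, and f : G → Y Borel measurable and Gâteaux differentiable at every point of G. Then f is Hadamard differentiable at all points of G except a set that is nowhere dense and σ-directionally porous. -/
open Filter Metric Set Topology MeasureTheory

/-- Points `y` of `G` from which `f` is controlled along a fixed cone. -/
def ConeSet {X Y : Type*} [NormedAddCommGroup X] [NormedSpace ℝ X] [NormedAddCommGroup Y]
    (G : Set X) (f : X → Y) (m : ℝ) (c : X) (r : ℝ) : Set X :=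
  {y | y ∈ G ∧ ∀ z ∈ G, ∀ t : ℝ, 0 < t → t * m < 1 → ‖z - (y + t • c)‖ < t * r →
    ‖f z - f y‖ ≤ m * t}

section Aux
variable {X Y : Type*} [NormedAddCommGroup X] [NormedSpace ℝ X]
    [NormedAddCommGroup Y] [NormedSpace ℝ Y]

lemma gateaux_cont {f : X → Y} {x : X} {L : X →L[ℝ] Y} (h : GateauxDiffAt f x L) (v : X) :
    Tendsto (fun t : ℝ => f (x + t • v)) (𝓝[≠] (0:ℝ)) (𝓝 (f x)) := by
  have h1 : Tendsto (fun t : ℝ => t) (𝓝[≠] (0:ℝ)) (𝓝 0) := nhdsWithin_le_nhds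
  have h2 := (h1.smul (h v)).add_const (f x)
  simp only [zero_smul, zero_add] at h2
  refine h2.congr' ?_
  filter_upwards [self_mem_nhdsWithin] with t ht
  rw [smul_inv_smul₀ ht]
  simp

lemma aff_residual (a : ℝ) (ha : a ≠ 0) (b : X) :
    Tendsto (fun u : X => a • u + b) (residual X) (residual X) := by
  let e : X ≃ₜ X := (Homeomorph.smulOfNeZero a ha).trans (Homeomorph.addRight b)
  exact tendsto_residual_of_isOpenMap e.continuous e.isOpenMap

lemma key_rat [CompleteSpace X] {f : X → Y} {y z : X} {L : X →L[ℝ] Y}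
    (hz : GateauxDiffAt f z L) {t M r : ℝ} (ht : 0 < t) {c : X}
    (h : ∀ᶠ v in residual X, v ∈ ball c r → ‖f (y + t • v) - f y‖ ≤ M)
    (hd : ‖z - (y + t • c)‖ < t * r) : ‖f z - f y‖ ≤ M := by
  let s : ℕ → ℝ := fun n => 1 / ((n:ℝ) + 1)
  have hs0 : ∀ n, s n ≠ 0 := fun n => by positivity
  have hs : Tendsto s atTop (𝓝 0) := tendsto_one_div_add_atTop_nhds_zero_nat
  have hs' : Tendsto s atTop (𝓝[≠] 0) :=
    tendsto_nhdsWithin_iff.2 ⟨hs, Eventually.of_forall hs0⟩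
  have h1 : ∀ᶠ u in residual X, ∀ n : ℕ,
      ((t⁻¹ * s n) • u + t⁻¹ • (z - y)) ∈ ball c r →
        ‖f (y + t • ((t⁻¹ * s n) • u + t⁻¹ • (z - y))) - f y‖ ≤ M := by
    rw [eventually_countable_forall]
    intro n
    exact (aff_residual (t⁻¹ * s n) (mul_ne_zero (inv_ne_zero ht.ne') (hs0 n)) _).eventually h
  obtain ⟨u, hu⟩ := (dense_of_mem_residual h1).nonempty
  have h2 : Tendsto (fun n => f (z + s n • u)) atTop (𝓝 (f z)) := (gateaux_cont hz u).comp hs'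
  have h3 : Tendsto (fun n => ‖f (z + s n • u) - f y‖) atTop (𝓝 ‖f z - f y‖) :=
    (h2.sub_const _).norm
  refine le_of_tendsto h3 ?_
  have h4 : Tendsto (fun n => (t⁻¹ * s n) • u + t⁻¹ • (z - y)) atTop (𝓝 (t⁻¹ • (z - y))) := by
    have := ((hs.const_mul t⁻¹).smul_const u).add_const (t⁻¹ • (z - y))
    simpa using this
  have h5 : t⁻¹ • (z - y) ∈ ball c r := by
    rw [mem_ball_iff_norm]
    have : t⁻¹ • (z - y) - c = t⁻¹ • (z - (y + t • c)) := by
      rw [← sub_sub, smul_sub t⁻¹ (z - y), inv_smul_smul₀ ht.ne']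
    rw [this, norm_smul, norm_inv, Real.norm_of_nonneg ht.le, inv_mul_lt_iff₀ ht]
    exact hd
  filter_upwards [h4.eventually (isOpen_ball.mem_nhds h5)] with n hn
  have := hu n hn
  have e : y + t • ((t⁻¹ * s n) • u + t⁻¹ • (z - y)) = z + s n • u := by
    rw [smul_add, smul_smul, ← mul_assoc, mul_inv_cancel₀ ht.ne', one_mul, smul_inv_smul₀ ht.ne']
    abel
  rwa [e] at this

lemma mem_cone [CompleteSpace X] {G : Set X} {f : X → Y}
    (hGat : ∀ x ∈ G, ∃ L : X →L[ℝ] Y, GateauxDiffAt f x L) {m r : ℝ} {c y : X} (hy : y ∈ G)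
    (h : ∀ᶠ v in residual X, v ∈ ball c r → ∀ q : ℚ, 0 < (q:ℝ) → (q:ℝ) * m < 1 →
      ‖f (y + (q:ℝ) • v) - f y‖ ≤ m * q) : y ∈ ConeSet G f m c r := by
  refine ⟨hy, fun z hz t ht htm hd => ?_⟩
  obtain ⟨L, hL⟩ := hGat z hz
  by_contra hcon
  push Not at hcon
  have o1 : ∀ᶠ s in 𝓝 t, 0 < s := lt_mem_nhds ht
  have o2 : ∀ᶠ s in 𝓝 t, s * m < 1 :=
    (continuous_id.mul continuous_const).continuousAt.eventually_lt continuousAt_const htm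
  have o3 : ∀ᶠ s in 𝓝 t, ‖z - (y + s • c)‖ < s * r := by
    refine ContinuousAt.eventually_lt ?_ ?_ hd
    · exact Continuous.continuousAt (by fun_prop)
    · exact Continuous.continuousAt (by fun_prop)
  have o4 : ∀ᶠ s in 𝓝 t, m * s < ‖f z - f y‖ := by
    refine ContinuousAt.eventually_lt ?_ continuousAt_const hcon
    exact Continuous.continuousAt (by fun_prop)
  obtain ⟨s, ⟨h1, h2, h3, h4⟩, q, rfl⟩ :=
    mem_closure_iff_nhds.1 (Rat.denseRange_cast (𝕜 := ℝ) t) _ (o1.and (o2.and (o3.and o4)))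
  have := key_rat hL h1 (M := m * q) (h.mono fun v hv hb => hv hb q h1 h2) h3
  linarith

lemma cover [CompleteSpace X] [TopologicalSpace.SeparableSpace X]
    [MeasurableSpace X] [BorelSpace X] [MeasurableSpace Y] [BorelSpace Y]
    {G : Set X} {f : X → Y} (hmeas : Measurable f)
    (hGat : ∀ x ∈ G, ∃ L : X →L[ℝ] Y, GateauxDiffAt f x L)
    {d : ℕ → X} (hd : DenseRange d) {x : X} (hx : x ∈ G) :
    ∃ m i k : ℕ, x ∈ ConeSet G f ((m:ℝ) + 1) (d i) (1 / ((k:ℝ) + 1)) := by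
  let A : ℕ → Set X := fun m => {v | ∀ q : ℚ, 0 < (q:ℝ) → (q:ℝ) * ((m:ℝ) + 1) < 1 →
      ‖f (x + (q:ℝ) • v) - f x‖ ≤ ((m:ℝ) + 1) * q}
  have hA : ∀ m, MeasurableSet (A m) := by
    intro m
    simp only [A, ofPred_forall]
    refine MeasurableSet.iInter fun q => MeasurableSet.iInter fun _ => MeasurableSet.iInter fun _ => ?_
    have h1 : Measurable (fun v : X => f (x + (q:ℝ) • v)) :=
      hmeas.comp (Continuous.measurable (by fun_prop))
    have h2 : Measurable (fun v : X => ‖f (x + (q:ℝ) • v) - f x‖) :=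
      (Continuous.measurable (f := fun y : Y => ‖y - f x‖) (by fun_prop)).comp h1
    exact measurableSet_le h2 measurable_const
  have hU : ⋃ m, A m = univ := by
    refine eq_univ_of_forall fun v => mem_iUnion.2 ?_
    obtain ⟨L, hL⟩ := hGat x hx
    have h1 : ∀ᶠ t in 𝓝[≠] (0:ℝ), ‖t⁻¹ • (f (x + t • v) - f x)‖ < ‖L v‖ + 1 :=
      (hL v).norm.eventually (gt_mem_nhds (lt_add_one _))
    rw [eventually_nhdsWithin_iff, Metric.eventually_nhds_iff] at h1
    obtain ⟨ε, hε, h1⟩ := h1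
    obtain ⟨m, hm⟩ := exists_nat_gt (max (‖L v‖ + 1) (1 / ε))
    refine ⟨m, fun q hq hqm => ?_⟩
    have hm1 := (le_max_left _ _).trans_lt hm
    have hm2 := (le_max_right _ _).trans_lt hm
    have hqe : (q:ℝ) < ε := by
      rw [div_lt_iff₀ hε] at hm2
      by_contra hc
      push Not at hc
      have : (m:ℝ) * ε ≤ m * q := by gcongr
      nlinarith
    have h2 := h1 (y := (q:ℝ)) (by rw [Real.dist_eq, sub_zero, abs_of_pos hq]; exact hqe) hq.ne'
    rw [norm_smul, norm_inv, Real.norm_of_nonneg hq.le, inv_mul_lt_iff₀ hq] at h2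
    nlinarith
  choose U hUo hUe using fun m => (hA m).residualEq_isOpen
  have hne : ∃ m, (U m).Nonempty := by
    by_contra hcon
    push Not at hcon
    have h1 : ∀ᶠ v in residual X, ∀ m, v ∉ A m := by
      rw [eventually_countable_forall]
      intro m
      filter_upwards [(hUe m).mem_iff] with v hv
      rw [hv, hcon m]; simp
    obtain ⟨v, hv⟩ := (dense_of_mem_residual h1).nonempty
    have : v ∈ ⋃ m, A m := by rw [hU]; trivial
    obtain ⟨m, hm⟩ := mem_iUnion.1 this
    exact hv m hm
  obtain ⟨m, u, hu⟩ := hne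
  obtain ⟨δ, hδ, hb⟩ := Metric.isOpen_iff.1 (hUo m) u hu
  obtain ⟨k, hk⟩ := exists_nat_one_div_lt (half_pos hδ)
  have hk0 : (0:ℝ) < 1 / ((k:ℝ) + 1) := by positivity
  obtain ⟨i, hi⟩ := hd.exists_dist_lt u hk0
  refine ⟨m, i, k, mem_cone hGat hx ?_⟩
  filter_upwards [(hUe m).mem_iff] with v hv hvb
  refine hv.2 (hb ?_)
  rw [mem_ball] at hvb ⊢
  have := dist_triangle v (d i) u
  rw [dist_comm u] at hi
  linarith

lemma porous_aux {G : Set X} (hG : IsOpen G) {f : X → Y} {x : X} (hx : x ∈ G)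
    {L : X →L[ℝ] Y} (hL : GateauxDiffAt f x L) (hn : ¬ HadamardDiffAt f x L)
    {m r : ℝ} (hm : 0 < m) (hr : 0 < r) (c : X) :
    ∃ w : X, ∃ p > (0:ℝ), ∃ᶠ t in 𝓝[>] (0:ℝ), ball (x + t • w) (p * t) ∩ ConeSet G f m c r = ∅ := by
  simp only [HadamardDiffAt, not_forall] at hn
  obtain ⟨v, hv⟩ := hn
  rw [HadamardDerivAt, Metric.tendsto_nhds] at hv
  push Not at hv
  obtain ⟨ε, hε, hfr⟩ := hv
  let κ : ℝ := ε / (4 * m)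
  have hκ : 0 < κ := by positivity
  have hκm : 4 * m * κ = ε := by simp only [κ]; field_simp
  have hp : 0 < κ * r / 2 := by positivity
  have T1 : Tendsto (Prod.fst : ℝ × X → ℝ) ((𝓝[≠] (0:ℝ)) ×ˢ 𝓝 v) (𝓝[≠] 0) := tendsto_fst
  have T1' : Tendsto (Prod.fst : ℝ × X → ℝ) ((𝓝[≠] (0:ℝ)) ×ˢ 𝓝 v) (𝓝 0) :=
    T1.mono_right nhdsWithin_le_nhds
  have T2 : Tendsto (Prod.snd : ℝ × X → X) ((𝓝[≠] (0:ℝ)) ×ˢ 𝓝 v) (𝓝 v) := tendsto_snd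
  have E1 := T1.eventually (self_mem_nhdsWithin)
  have E2 := T1.eventually ((Metric.tendsto_nhds.1 (hL v)) (ε / 2) (half_pos hε))
  have E3 := T2.eventually (Metric.ball_mem_nhds v hp)
  have E4 : ∀ᶠ q : ℝ × X in (𝓝[≠] (0:ℝ)) ×ˢ 𝓝 v, x + q.1 • q.2 ∈ G := by
    have : Tendsto (fun q : ℝ × X => x + q.1 • q.2) ((𝓝[≠] (0:ℝ)) ×ˢ 𝓝 v) (𝓝 x) := by
      simpa using (T1'.smul T2).const_add x
    exact this.eventually (hG.mem_nhds hx)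
  have E5 : ∀ᶠ q : ℝ × X in (𝓝[≠] (0:ℝ)) ×ˢ 𝓝 v, x + q.1 • v ∈ G := by
    have : Tendsto (fun q : ℝ × X => x + q.1 • v) ((𝓝[≠] (0:ℝ)) ×ˢ 𝓝 v) (𝓝 x) := by
      simpa using (T1'.smul_const v).const_add x
    exact this.eventually (hG.mem_nhds hx)
  have E6 : ∀ᶠ q : ℝ × X in (𝓝[≠] (0:ℝ)) ×ˢ 𝓝 v, κ * |q.1| * m < 1 := by
    have : Tendsto (fun q : ℝ × X => κ * |q.1| * m) ((𝓝[≠] (0:ℝ)) ×ˢ 𝓝 v) (𝓝 0) := by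
      simpa using (T1'.abs.const_mul κ).mul_const m
    exact this.eventually (gt_mem_nhds one_pos)
  have F : ∃ᶠ t in 𝓝[≠] (0:ℝ),
      ball (x + t • v - (κ * |t|) • c) (κ * r / 2 * |t|) ∩ ConeSet G f m c r = ∅ := by
    refine T1.frequently ((hfr.and_eventually
      (E1.and (E2.and (E3.and (E4.and (E5.and E6)))))).mono ?_)
    rintro ⟨t, z⟩ ⟨h0, h1, h2, h3, h4, h5, h6⟩
    simp only [mem_compl_iff, mem_singleton_iff, mem_ball] at h0 h1 h2 h3 h4 h5 h6 ⊢
    have ht : 0 < |t| := abs_pos.2 h1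
    rw [eq_empty_iff_forall_notMem]
    rintro y ⟨hyb, -, hy⟩
    rw [mem_ball_iff_norm] at hyb
    rw [dist_eq_norm] at h3
    have hs : 0 < κ * |t| := by positivity
    have a1 : ‖(x + t • v) - (y + (κ * |t|) • c)‖ < κ * r / 2 * |t| := by
      have e : (x + t • v) - (y + (κ * |t|) • c) = -(y - (x + t • v - (κ * |t|) • c)) := by abel
      rw [e, norm_neg]
      exact hyb
    have a2 : ‖(x + t • z) - (y + (κ * |t|) • c)‖ < κ * |t| * r := by
      have e : (x + t • z) - (y + (κ * |t|) • c)
          = ((x + t • v) - (y + (κ * |t|) • c)) + t • (z - v) := by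
        rw [smul_sub]; abel
      have b1 : ‖t • (z - v)‖ ≤ |t| * (κ * r / 2) := by
        rw [norm_smul, Real.norm_eq_abs]; gcongr
      rw [e]
      have := norm_add_le ((x + t • v) - (y + (κ * |t|) • c)) (t • (z - v))
      nlinarith
    have c1 := hy _ h5 _ hs h6 (a1.trans_le (by nlinarith [mul_pos (mul_pos hκ hr) ht]))
    have c2 := hy _ h4 _ hs h6 a2
    have c3 : ‖f (x + t • z) - f (x + t • v)‖ ≤ 2 * (m * (κ * |t|)) := by
      have := norm_sub_le (f (x + t • z) - f y) (f (x + t • v) - f y)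
      rw [sub_sub_sub_cancel_right] at this
      linarith
    have c4 : ε / 2 < ‖t⁻¹ • (f (x + t • z) - f (x + t • v))‖ := by
      have e : t⁻¹ • (f (x + t • z) - f (x + t • v))
          = t⁻¹ • (f (x + t • z) - f x) - t⁻¹ • (f (x + t • v) - f x) := by
        rw [← smul_sub, sub_sub_sub_cancel_right]
      rw [e, ← dist_eq_norm]
      have := dist_triangle (t⁻¹ • (f (x + t • z) - f x)) (t⁻¹ • (f (x + t • v) - f x)) (L v)
      linarith
    rw [norm_smul, norm_inv, Real.norm_eq_abs, lt_inv_mul_iff₀ ht] at c4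
    nlinarith
  rw [← Iio_union_Ioi, nhdsWithin_union, frequently_sup] at F
  rcases F with F | F
  · refine ⟨-v - κ • c, κ * r / 2, hp, ?_⟩
    have hneg : Tendsto (fun t : ℝ => -t) (𝓝[<] (0:ℝ)) (𝓝[>] 0) := by
      simpa using tendsto_neg_nhdsLT (a := (0:ℝ))
    refine hneg.frequently ((F.and_eventually self_mem_nhdsWithin).mono ?_)
    rintro t ⟨h, ht : t < 0⟩
    rw [abs_of_neg ht] at h
    convert h using 3
    module
  · refine ⟨v - κ • c, κ * r / 2, hp, (F.and_eventually self_mem_nhdsWithin).mono ?_⟩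
    rintro t ⟨h, ht : 0 < t⟩
    rw [abs_of_pos ht] at h
    convert h using 3
    module

end Aux

theorem stmt16 {X Y : Type*} [NormedAddCommGroup X] [NormedSpace ℝ X] [CompleteSpace X]
    [TopologicalSpace.SeparableSpace X]
    [MeasurableSpace X] [BorelSpace X]
    [NormedAddCommGroup Y] [NormedSpace ℝ Y] [CompleteSpace Y]
    [MeasurableSpace Y] [BorelSpace Y]
    (G : Set X) (hG : IsOpen G) (f : X → Y) (hmeas : Measurable f)
    (hGat : ∀ x ∈ G, ∃ L : X →L[ℝ] Y, GateauxDiffAt f x L) :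
    ∃ A : Set X, IsNowhereDense A ∧ SigmaDirPorous A ∧
      ∀ x ∈ G \ A, ∃ L : X →L[ℝ] Y, HadamardDiffAt f x L := by
  classical
  obtain ⟨d, hd⟩ := TopologicalSpace.exists_dense_seq X
  let A : Set X := {x | x ∈ G ∧ ¬ ∃ L : X →L[ℝ] Y, HadamardDiffAt f x L}
  let C : ℕ × ℕ × ℕ → Set X := fun j =>
    ConeSet G f ((j.1:ℝ) + 1) (d j.2.1) (1 / ((j.2.2:ℝ) + 1))
  have hC : ∀ x ∈ G, ∃ j, x ∈ C j := by
    intro x hx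
    obtain ⟨m, i, k, h⟩ := cover hmeas hGat hd hx
    exact ⟨(m, i, k), h⟩
  have hP : ∀ x ∈ A, ∀ j, ∃ w : X, ∃ p > (0:ℝ), ∃ᶠ t in 𝓝[>] (0:ℝ),
      ball (x + t • w) (p * t) ∩ C j = ∅ := by
    rintro x ⟨hx, hn⟩ j
    obtain ⟨L, hL⟩ := hGat x hx
    exact porous_aux hG hx hL (fun h => hn ⟨L, h⟩) (by positivity) (by positivity) _
  refine ⟨A, ?_, ?_, ?_⟩
  · by_contra hne
    rw [IsNowhereDense, ← ne_eq, ← nonempty_iff_ne_empty] at hne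
    obtain ⟨a, ha⟩ := hne
    obtain ⟨b, hb, hbA⟩ := mem_closure_iff.1 (interior_subset ha) _ isOpen_interior ha
    let F : Option (ℕ × ℕ × ℕ) → Set X := fun o => o.elim Gᶜ (fun j => closure (C j))
    have hF : Dense (⋃ o, interior (F o)) := by
      refine dense_iUnion_interior_of_closed ?_ ?_
      · rintro (_ | j)
        · exact hG.isClosed_compl
        · exact isClosed_closure
      · refine eq_univ_of_forall fun x => mem_iUnion.2 ?_
        by_cases hx : x ∈ G
        · obtain ⟨j, hj⟩ := hC x hx
          exact ⟨some j, subset_closure hj⟩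
        · exact ⟨none, hx⟩
    obtain ⟨e, ⟨he1, he2⟩, he3⟩ := hF.inter_open_nonempty _ (isOpen_interior.inter hG)
      ⟨b, hb, hbA.1⟩
    obtain ⟨o, ho⟩ := mem_iUnion.1 he3
    rcases o with _ | j
    · exact (interior_subset ho) he2
    · obtain ⟨x, hxV, hxA⟩ := mem_closure_iff.1 (interior_subset he1) _ isOpen_interior ho
      obtain ⟨w, p, hp, hfr⟩ := hP x hxA j
      have hT : Tendsto (fun t : ℝ => x + t • w) (𝓝[>] (0:ℝ)) (𝓝 x) := by
        have : Tendsto (fun t : ℝ => t) (𝓝[>] (0:ℝ)) (𝓝 0) := nhdsWithin_le_nhds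
        simpa using (this.smul_const w).const_add x
      obtain ⟨t, h1, h2, h3⟩ := (hfr.and_eventually ((hT.eventually
        (isOpen_interior.mem_nhds hxV)).and self_mem_nhdsWithin)).exists
      have h3' : 0 < t := h3
      have h4 : x + t • w ∈ closure (C j) := interior_subset h2
      obtain ⟨y, hy⟩ := mem_closure_iff.1 h4 _ isOpen_ball (mem_ball_self (mul_pos hp h3'))
      rw [h1] at hy
      exact hy
  · obtain ⟨g, hg⟩ := exists_surjective_nat (ℕ × ℕ × ℕ)
    refine ⟨fun n => A ∩ C (g n), ?_, ?_⟩
    · rw [← inter_iUnion, eq_comm, inter_eq_left]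
      intro x hx
      obtain ⟨j, hj⟩ := hC x hx.1
      obtain ⟨n, rfl⟩ := hg j
      exact mem_iUnion.2 ⟨n, hj⟩
    · rintro n x ⟨hxA, hxC⟩
      obtain ⟨w, p, hp, hfr⟩ := hP x hxA (g n)
      obtain ⟨t, ht, ht'⟩ := exists_seq_forall_of_frequently
        (hfr.and_eventually self_mem_nhdsWithin)
      refine ⟨w, ?_, p, hp, t, fun k => (ht' k).2, ht.mono_right nhdsWithin_le_nhds, fun k => ?_⟩
      · rintro rfl
        have h1 := (ht' 0).1
        have h2 : 0 < t 0 := (ht' 0).2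
        have : x ∈ ball (x + t 0 • (0:X)) (p * t 0) ∩ C (g n) :=
          ⟨by simpa using mul_pos hp h2, hxC⟩
        rw [h1] at this
        exact this
      · refine subset_empty_iff.1 ?_
        rw [← (ht' k).1]
        exact inter_subset_inter_right _ inter_subset_right
  · rintro x ⟨hx, hxA⟩
    by_contra hcon
    exact hxA ⟨hx, hcon⟩
end

section
/- Let G ⊂ ℝⁿ be open, Y a Banach space, and f : G → Y Gâteaux differentiable at every point of G. Then f is Fréchet differentiable at all points of G except a set that is nowhere dense and σ-porous. -/
open Filter Metric Set Topology MeasureTheory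

namespace Stmt17Aux

lemma not_porous {X : Type*} [NormedAddCommGroup X] {A : Set X} {x : X} (h : ¬ PorousAt A x)
    {p : ℝ} (hp : 0 < p) :
    ∃ ε > 0, ∀ y, y ≠ x → ‖y - x‖ < ε → ∃ z ∈ A, ‖z - y‖ < p * ‖y - x‖ := by
  by_contra! hc
  apply h
  choose y hy1 hy2 hy3 using fun k : ℕ => hc (1 / ((k : ℝ) + 1)) Nat.one_div_pos_of_nat
  refine ⟨p, hp, y, hy1, ?_, ?_⟩
  · rw [tendsto_iff_norm_sub_tendsto_zero]
    exact squeeze_zero (fun _ => norm_nonneg _) (fun k => (hy2 k).le)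
      tendsto_one_div_add_atTop_nhds_zero_nat
  · intro k
    rw [Set.eq_empty_iff_forall_notMem]
    rintro z ⟨hz1, hz2⟩
    have := hy3 k z hz2
    rw [mem_ball, dist_eq_norm] at hz1
    linarith

lemma not_porous_interior {X : Type*} [NormedAddCommGroup X] {A : Set X} {x : X}
    (h : x ∈ interior A) : ¬ PorousAt A x := by
  rintro ⟨p, hp, y, hy, ht, hd⟩
  have h1 : ∀ᶠ k in atTop, y k ∈ interior A := ht (isOpen_interior.mem_nhds h)
  obtain ⟨k, hk⟩ := h1.exists
  have : y k ∈ ball (y k) (p * ‖y k - x‖) ∩ A :=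
    ⟨mem_ball_self (mul_pos hp (norm_pos_iff.2 (sub_ne_zero.2 (hy k)))), interior_subset hk⟩
  rw [hd k] at this
  exact this

lemma porous_mono {X : Type*} [NormedAddCommGroup X] {A B : Set X} {x : X} (hAB : A ⊆ B)
    (h : PorousAt B x) : PorousAt A x := by
  obtain ⟨p, hp, y, hy, ht, hd⟩ := h
  refine ⟨p, hp, y, hy, ht, fun k => ?_⟩
  rw [← Set.subset_empty_iff, ← hd k]
  exact inter_subset_inter_right _ hAB

lemma sigma_porous {X : Type*} [NormedAddCommGroup X] {ι : Type*} [Countable ι] [Nonempty ι]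
    (A : Set X) (T : ι → Set X)
    (h : ∀ x ∈ A, ∃ i, x ∈ T i ∧ PorousAt (T i) x) : SigmaPorous A := by
  obtain ⟨g, hg⟩ := exists_surjective_nat ι
  refine ⟨fun k => {x | x ∈ A ∧ x ∈ T (g k) ∧ PorousAt (T (g k)) x}, ?_, ?_⟩
  · ext x
    simp only [mem_iUnion, Set.mem_ofPred_eq]
    constructor
    · intro hx
      obtain ⟨i, hi⟩ := h x hx
      obtain ⟨k, rfl⟩ := hg i
      exact ⟨k, hx, hi⟩
    · rintro ⟨_, hx, _⟩
      exact hx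
  · rintro k x ⟨_, _, hx⟩
    exact porous_mono (fun y hy => hy.2.1) hx

/-- Baire theorem for coordinatewise closed sets. -/
lemma baire_pi {ι : Type*} [Countable ι] (d : ℕ) : ∀ (E : ι → Set (Fin d → ℝ))
    (O : Set (Fin d → ℝ)), IsOpen O → O.Nonempty → O ⊆ ⋃ m, E m →
    (∀ m, ∀ x ∈ O, ∀ i, (∃ᶠ s in 𝓝 (x i), Function.update x i s ∈ E m) → x ∈ E m) →
    ∃ m, ∃ V, IsOpen V ∧ V.Nonempty ∧ V ⊆ O ∧ V ⊆ E m := by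
  induction d with
  | zero =>
    intro E O _ hne hcov _
    obtain ⟨x, hx⟩ := hne
    obtain ⟨m, hm⟩ := mem_iUnion.1 (hcov hx)
    refine ⟨m, univ, isOpen_univ, ⟨x, trivial⟩, fun y _ => ?_, fun y _ => ?_⟩
    · rwa [Subsingleton.elim y x]
    · rwa [Subsingleton.elim y x]
  | succ d ih =>
    intro E O hO hne hcov hcl
    obtain ⟨x, hx⟩ := hne
    have hcont : Continuous (fun q : ℝ × (Fin d → ℝ) => (Fin.cons q.1 q.2 : Fin (d+1) → ℝ)) := by
      refine continuous_pi fun i => ?_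
      refine Fin.cases ?_ (fun j => ?_) i
      · simpa using continuous_fst
      · simp only [Fin.cons_succ]; fun_prop
    have hpre := hO.preimage hcont
    have hmem : (x 0, Fin.tail x) ∈ (fun q : ℝ × (Fin d → ℝ) =>
        (Fin.cons q.1 q.2 : Fin (d+1) → ℝ)) ⁻¹' O := by
      simpa [Fin.cons_self_tail] using hx
    obtain ⟨I, O', hI, hO', hxI, hxO', hsub⟩ := isOpen_prod_iff.1 hpre _ _ hmem
    let Bs := TopologicalSpace.countableBasis (Fin d → ℝ)
    have hBc : Countable Bs := (TopologicalSpace.countable_countableBasis _).to_subtype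
    let F : ι × Bs → Set ℝ := fun q => {s | (q.2 : Set (Fin d → ℝ)).Nonempty ∧
      (q.2 : Set (Fin d → ℝ)) ⊆ O' ∧ ∀ b ∈ (q.2 : Set (Fin d → ℝ)),
        (Fin.cons s b : Fin (d+1) → ℝ) ∈ E q.1}
    have hF : ∀ s ∈ I, ∃ q, s ∈ F q := by
      intro s hs
      obtain ⟨m, V, hV, ⟨v, hv⟩, hVO, hVE⟩ := ih
        (fun m => {b | (Fin.cons s b : Fin (d+1) → ℝ) ∈ E m}) O' hO' ⟨_, hxO'⟩
        (by
          intro b hb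
          have := hcov (hsub (mk_mem_prod hs hb))
          simpa using this)
        (by
          intro m b hb i hfr
          apply hcl m _ (hsub (mk_mem_prod hs hb)) i.succ
          simp only [Fin.cons_succ]
          refine hfr.mono fun r hr => ?_
          rw [← Fin.cons_update]
          exact hr)
      obtain ⟨B, hB, hvB, hBV⟩ :=
        (TopologicalSpace.isBasis_countableBasis (Fin d → ℝ)).exists_subset_of_mem_open hv hV
      exact ⟨(m, ⟨B, hB⟩), ⟨v, hvB⟩, hBV.trans hVO, fun b hb => hVE (hBV hb)⟩
    obtain ⟨q0, hq0⟩ := hF _ hxI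
    have hdense := dense_iUnion_interior_of_closed (f := fun q => closure (F q) ∪ Iᶜ)
      (fun q => isClosed_closure.union hI.isClosed_compl)
      (by
        ext s
        simp only [mem_iUnion, mem_univ, iff_true]
        by_cases hs : s ∈ I
        · obtain ⟨q, hq⟩ := hF s hs
          exact ⟨q, Or.inl (subset_closure hq)⟩
        · exact ⟨q0, Or.inr hs⟩)
    obtain ⟨s, hsI, hs⟩ := hdense.inter_open_nonempty I hI ⟨_, hxI⟩
    obtain ⟨⟨m, B, hB⟩, hq⟩ := mem_iUnion.1 hs
    set J := I ∩ interior (closure (F (m, ⟨B, hB⟩)) ∪ Iᶜ) with hJ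
    have hJF : J ⊆ closure (F (m, ⟨B, hB⟩)) := by
      rintro r ⟨hr1, hr2⟩
      rcases interior_subset hr2 with h | h
      · exact h
      · exact absurd hr1 h
    have hJo : IsOpen J := hI.inter isOpen_interior
    have hsJ : s ∈ J := ⟨hsI, hq⟩
    have hBo : IsOpen B := TopologicalSpace.isOpen_of_mem_countableBasis hB
    obtain ⟨r, hr⟩ : (F (m, ⟨B, hB⟩)).Nonempty := closure_nonempty_iff.1 ⟨s, hJF hsJ⟩
    obtain ⟨⟨b, hb⟩, hBO', -⟩ := hr
    have hVO : {x : Fin (d+1) → ℝ | x 0 ∈ J ∧ Fin.tail x ∈ B} ⊆ O := by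
      rintro y ⟨hy1, hy2⟩
      have := hsub (mk_mem_prod hy1.1 (hBO' hy2))
      simpa [Fin.cons_self_tail] using this
    refine ⟨m, {x | x 0 ∈ J ∧ Fin.tail x ∈ B}, ?_, ⟨Fin.cons s b, ?_⟩, hVO, ?_⟩
    · have h1 : Continuous (fun x : Fin (d+1) → ℝ => x 0) := continuous_apply 0
      have h2 : Continuous (fun x : Fin (d+1) → ℝ => Fin.tail x) :=
        continuous_pi fun i => continuous_apply i.succ
      exact (hJo.preimage h1).inter (hBo.preimage h2)
    · simpa using ⟨hsJ, hb⟩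
    · intro y hy
      apply hcl m y (hVO hy) 0
      have := mem_closure_iff_frequently.1 (hJF hy.1)
      refine this.mono fun r hr => ?_
      have h3 := hr.2.2 _ hy.2
      rw [← Fin.cons_self_tail y, Fin.update_cons_zero]
      simpa using h3

lemma baire_line {ι : Type*} [Countable ι] {d : ℕ} (E : ι → Set (EuclideanSpace ℝ (Fin d)))
    (O : Set (EuclideanSpace ℝ (Fin d))) (hO : IsOpen O) (hne : O.Nonempty) (hcov : O ⊆ ⋃ m, E m)
    (hcl : ∀ m, ∀ x ∈ O, ∀ v, (∃ᶠ s in 𝓝 (0:ℝ), x + s • v ∈ E m) → x ∈ E m) :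
    ∃ m, ∃ V, IsOpen V ∧ V.Nonempty ∧ V ⊆ O ∧ V ⊆ E m := by
  let φ := (EuclideanSpace.equiv (Fin d) ℝ).symm
  obtain ⟨m, V, hV, ⟨v, hv⟩, hVO, hVE⟩ := baire_pi d (fun m => φ ⁻¹' (E m)) (φ ⁻¹' O)
    (hO.preimage φ.continuous) (by
      obtain ⟨x, hx⟩ := hne
      exact ⟨φ.symm x, by simpa using hx⟩)
    (by
      intro x hx
      simpa using hcov hx)
    (by
      intro m x hx i hfr
      apply hcl m (φ x) hx (φ (Pi.single i 1))
      have ht : Tendsto (fun s => s - x i) (𝓝 (x i)) (𝓝 0) := by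
        have : Continuous (fun s => s - x i) := by fun_prop
        simpa using this.tendsto (x i)
      refine ht.frequently (hfr.mono fun s hs => ?_)
      have : Function.update x i s = x + (s - x i) • Pi.single i (1:ℝ) := by
        ext j
        by_cases hj : j = i
        · subst hj; simp
        · simp [hj]
      rw [mem_preimage, this, map_add, map_smul] at hs
      exact hs)
  refine ⟨m, φ.symm ⁻¹' V, hV.preimage φ.symm.continuous, ⟨φ v, by simpa using hv⟩, ?_, ?_⟩
  · intro y hy
    simpa using hVO hy
  · intro y hy
    simpa using hVE hy

section
variable {X Y : Type*} [NormedAddCommGroup X] [NormedSpace ℝ X]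
  [NormedAddCommGroup Y] [NormedSpace ℝ Y]

lemma gateaux_cont {f : X → Y} {x : X} {L : X →L[ℝ] Y} (h : GateauxDiffAt f x L) (v : X) :
    Tendsto (fun t : ℝ => f (x + t • v)) (𝓝 0) (𝓝 (f x)) := by
  have h1 := h v
  have hd : HasDerivAt (fun t : ℝ => f (x + t • v)) (L v) 0 := by
    rw [hasDerivAt_iff_tendsto_slope_zero]
    simpa using h1
  simpa using hd.continuousAt.tendsto

lemma gateaux_bound {f : X → Y} {x : X} {L : X →L[ℝ] Y} (h : GateauxDiffAt f x L) (v : X)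
    {η : ℝ} (hη : 0 < η) :
    ∃ δ > 0, ∀ t : ℝ, |t| < δ → ‖f (x + t • v) - f x - t • L v‖ ≤ η * |t| := by
  have hd : HasDerivAt (fun t : ℝ => f (x + t • v)) (L v) 0 := by
    rw [hasDerivAt_iff_tendsto_slope_zero]
    simpa using h v
  have h2 := (hasDerivAt_iff_isLittleO_nhds_zero.1 hd).def hη
  obtain ⟨δ, hδ, h3⟩ := Metric.eventually_nhds_iff.1 h2
  refine ⟨δ, hδ, fun t ht => ?_⟩
  have := h3 (y := t) (by simpa using ht)
  simpa using this

/-- Uniform Lipschitz points. -/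
def LipS (f : X → Y) (K : ℕ) : Set X :=
  {z | ∀ y, ‖y - z‖ < 1 / ((K:ℝ) + 1) → ‖f y - f z‖ ≤ K * ‖y - z‖}

/-- Points with a uniform cone of directional Lipschitz bounds. -/
def ConeS (G : Set X) (f : X → Y) (m : ℕ) (u : X) (ρ : ℝ) : Set X :=
  {z | ball z (1 / ((m:ℝ) + 1)) ⊆ G ∧ u ≠ 0 ∧ 0 < ρ ∧ ball u ρ ⊆ ball 0 1 ∧
    ∀ v ∈ ball u ρ, ∀ t : ℝ, |t| < 1 / ((m:ℝ) + 1) → ‖f (z + t • v) - f z‖ ≤ m * |t|}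

lemma lip_of_coneS {G : Set X} {f : X → Y} {m : ℕ} {u : X} {ρ : ℝ} {x : X}
    (hx : x ∈ ConeS G f m u ρ) (hnp : ¬ PorousAt (ConeS G f m u ρ) x) :
    ∃ K, x ∈ LipS f K := by
  obtain ⟨-, hu, hρ, -, hxv⟩ := hx
  have hu' : 0 < ‖u‖ := norm_pos_iff.2 hu
  set C : ℝ := 2 / ‖u‖ with hC
  have hC0 : 0 < C := by positivity
  have hCu : C * ‖u‖ = 2 := by rw [hC]; field_simp
  obtain ⟨ε, hε, hpor⟩ := not_porous hnp (p := ρ * C / 3) (by positivity)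
  set D : ℝ := (3 + ρ * C + 1) / ρ with hD
  have hD0 : 0 < D := by positivity
  have hDρ : ρ * D = 3 + ρ * C + 1 := by rw [hD]; field_simp
  set r : ℝ := 1 / ((m:ℝ) + 1) with hr
  have hr0 : 0 < r := by positivity
  -- the constant
  obtain ⟨K, hK⟩ := exists_nat_ge (max (m * (C + 2 * D)) (max (3 / ε) (max (C / r) (D / r))))
  simp only [max_le_iff] at hK
  obtain ⟨hK1, hK2, hK3, hK4⟩ := hK
  refine ⟨K, fun y hy => ?_⟩
  rcases eq_or_ne y x with rfl | hne
  · simp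
  set t := ‖y - x‖ with ht
  have ht0 : 0 < t := norm_pos_iff.2 (sub_ne_zero.2 hne)
  have key : ∀ a b : ℝ, 0 < b → a / b ≤ K → 0 ≤ a → a * t < b := by
    intro a b hb hab ha
    rw [div_le_iff₀ hb] at hab
    rw [lt_div_iff₀ (by positivity)] at hy
    nlinarith
  have k2 := key _ _ hε hK2 (by norm_num)
  have k3 := key _ _ hr0 hK3 hC0.le
  have k4 := key _ _ hr0 hK4 hD0.le
  set s := C * t with hs
  have hs0 : 0 < s := by positivity
  have hsu : ‖s • u‖ = 2 * t := by
    rw [norm_smul, Real.norm_of_nonneg hs0.le, hs]; linear_combination t * hCu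
  have e1 : (y - s • u) - x = (y - x) - s • u := by abel
  have low : t ≤ ‖(y - s • u) - x‖ := by
    have := norm_sub_norm_le (s • u) (y - x)
    rw [norm_sub_rev (s • u) (y - x), ← e1, hsu] at this
    linarith
  have up : ‖(y - s • u) - x‖ ≤ 3 * t := by
    have := norm_sub_le (y - x) (s • u)
    rw [← e1, hsu] at this
    linarith
  obtain ⟨z, hz, hzd⟩ := hpor (y - s • u)
    (by intro h; rw [h, sub_self, norm_zero] at low; linarith) (by linarith)
  have hzd' : ‖z - (y - s • u)‖ < ρ * s := by
    refine hzd.trans_le ?_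
    have : ρ * C / 3 * ‖y - s • u - x‖ ≤ ρ * C / 3 * (3 * t) := by gcongr
    rw [hs]; linarith
  obtain ⟨-, -, -, -, hzv⟩ := hz
  -- estimate f y - f z
  have b1 : ‖f y - f z‖ ≤ m * s := by
    have h1 := hzv (s⁻¹ • (y - z)) (by
      rw [mem_ball, dist_eq_norm]
      have : s⁻¹ • (y - z) - u = s⁻¹ • (-(z - (y - s • u))) := by
        have h5 : u = s⁻¹ • (s • u) := by rw [smul_smul, inv_mul_cancel₀ hs0.ne', one_smul]
        conv_lhs => rw [h5]
        rw [← smul_sub]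
        congr 1
        abel
      rw [this, norm_smul, norm_neg, norm_inv, Real.norm_of_nonneg hs0.le, inv_mul_lt_iff₀ hs0]
      linarith) s (by rw [abs_of_pos hs0]; exact k3)
    rw [smul_smul, mul_inv_cancel₀ hs0.ne', one_smul, add_sub_cancel, abs_of_pos hs0] at h1
    exact h1
  -- estimate f z - f x
  set s' := D * t with hs'
  have hs'0 : 0 < s' := by positivity
  have hk4 : |s'| < r := by rw [abs_of_pos hs'0]; exact k4
  have hzx : ‖x - z‖ < ρ * s' := by
    have h1 : x - z = -((y - s • u) - x) - (z - (y - s • u)) := by abel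
    have h2 := norm_sub_le (-((y - s • u) - x)) (z - (y - s • u))
    rw [← h1, norm_neg] at h2
    have h3 : ρ * s' = 3 * t + ρ * s + t := by rw [hs', hs]; linear_combination t * hDρ
    linarith
  have b2 : ‖f (x + s' • u) - f x‖ ≤ m * s' := by
    have := hxv u (mem_ball_self hρ) s' hk4
    rwa [abs_of_pos hs'0] at this
  have b3 : ‖f (x + s' • u) - f z‖ ≤ m * s' := by
    have h1 := hzv (u + s'⁻¹ • (x - z)) (by
      rw [mem_ball, dist_eq_norm, add_sub_cancel_left, norm_smul, norm_inv,
        Real.norm_of_nonneg hs'0.le, inv_mul_lt_iff₀ hs'0]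
      linarith) s' hk4
    rw [smul_add, smul_smul, mul_inv_cancel₀ hs'0.ne', one_smul, abs_of_pos hs'0] at h1
    have h2 : z + (s' • u + (x - z)) = x + s' • u := by abel
    rwa [h2] at h1
  have e2 : f y - f x = (f y - f z) - (f (x + s' • u) - f z) + (f (x + s' • u) - f x) := by abel
  calc ‖f y - f x‖ ≤ ‖f y - f z‖ + ‖f (x + s' • u) - f z‖ + ‖f (x + s' • u) - f x‖ := by
        rw [e2]
        exact (norm_add_le _ _).trans (by gcongr; exact norm_sub_le _ _)
    _ ≤ m * s + m * s' + m * s' := by gcongr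
    _ = m * (C + 2 * D) * t := by rw [hs, hs']; ring
    _ ≤ K * t := by gcongr

lemma frechet_of_lipS [FiniteDimensional ℝ X] {f : X → Y} {K : ℕ} {x : X} {L : X →L[ℝ] Y}
    (hL : GateauxDiffAt f x L) (hnp : ¬ PorousAt (LipS f K) x) : HasFDerivAt f L x := by
  rw [hasFDerivAt_iff_isLittleO, Asymptotics.isLittleO_iff]
  intro c hc
  set M : ℝ := 3 * K + 1 + ‖L‖ with hM
  have hM0 : 0 < M := by positivity
  set η : ℝ := c / M with hη
  have hη0 : 0 < η := by positivity
  have hηM : η * M = c := by rw [hη]; field_simp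
  have : ProperSpace X := FiniteDimensional.proper ℝ X
  obtain ⟨D, hDs, hDf, hD⟩ := (isCompact_sphere (0:X) 1).finite_cover_balls hη0
  choose δ hδ hδb using fun w => gateaux_bound hL w hη0
  obtain ⟨ε, hε, hpor⟩ := not_porous hnp hη0
  have hev : ∀ᶠ y in 𝓝 x, ∀ w ∈ D, ‖y - x‖ < δ w := by
    rw [Filter.eventually_all_finite hDf]
    intro w _
    filter_upwards [ball_mem_nhds x (hδ w)] with y hy
    rwa [mem_ball, dist_eq_norm] at hy
  have hev2 : ∀ {a : ℝ}, 0 < a → ∀ᶠ y in 𝓝 x, ‖y - x‖ < a := by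
    intro a ha
    filter_upwards [ball_mem_nhds x ha] with y hy
    rwa [mem_ball, dist_eq_norm] at hy
  filter_upwards [hev, hev2 hε, hev2 (a := 1 / ((K:ℝ) + 1) / (2 * η)) (by positivity)]
    with y h1 h2 h3
  rcases eq_or_ne y x with rfl | hne
  · simp
  set t := ‖y - x‖ with ht
  have ht0 : 0 < t := norm_pos_iff.2 (sub_ne_zero.2 hne)
  have hsph : t⁻¹ • (y - x) ∈ sphere (0:X) 1 := by
    rw [mem_sphere_zero_iff_norm, norm_smul, norm_inv, Real.norm_of_nonneg ht0.le,
      inv_mul_cancel₀ ht0.ne']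
  obtain ⟨w, hwD, hw⟩ := mem_iUnion₂.1 (hD hsph)
  have hw1 : ‖w‖ = 1 := by simpa using hDs hwD
  have hyw : ‖y - (x + t • w)‖ ≤ η * t := by
    rw [mem_ball, dist_eq_norm] at hw
    have : y - (x + t • w) = t • (t⁻¹ • (y - x) - w) := by
      rw [smul_sub, smul_smul, mul_inv_cancel₀ ht0.ne', one_smul]; abel
    rw [this, norm_smul, Real.norm_of_nonneg ht0.le, mul_comm]
    gcongr
  have htw : ‖(x + t • w) - x‖ = t := by
    rw [add_sub_cancel_left, norm_smul, hw1, Real.norm_of_nonneg ht0.le, mul_one]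
  obtain ⟨z, hz, hzd⟩ := hpor (x + t • w)
    (by intro h; rw [h, sub_self, norm_zero] at htw; linarith) (by rw [htw]; exact h2)
  rw [htw] at hzd
  have hyz : ‖y - z‖ ≤ 2 * η * t := by
    have e : y - z = (y - (x + t • w)) - (z - (x + t • w)) := by abel
    have := norm_sub_le (y - (x + t • w)) (z - (x + t • w))
    rw [← e] at this
    linarith
  have hsm : 2 * η * t < 1 / ((K:ℝ) + 1) := by
    rw [lt_div_iff₀ (by positivity)] at h3
    linarith
  have a1 : ‖f y - f z‖ ≤ K * (2 * η * t) :=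
    (hz y (by linarith)).trans (by gcongr)
  have hzd' : ‖(x + t • w) - z‖ ≤ η * t := by rw [norm_sub_rev]; exact hzd.le
  have a2 : ‖f (x + t • w) - f z‖ ≤ K * (η * t) :=
    (hz _ (by nlinarith [mul_pos hη0 ht0])).trans (by gcongr)
  have a3 : ‖f (x + t • w) - f x - t • L w‖ ≤ η * t := by
    have := hδb w t (by rw [abs_of_pos ht0]; exact h1 w hwD)
    rwa [abs_of_pos ht0] at this
  have a4 : ‖L (y - (x + t • w))‖ ≤ ‖L‖ * (η * t) :=
    (L.le_opNorm _).trans (by gcongr)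
  have e : f y - f x - L (y - x) = (f y - f z) - (f (x + t • w) - f z)
      + (f (x + t • w) - f x - t • L w) - L (y - (x + t • w)) := by
    simp only [map_sub, map_add, map_smul]; abel
  calc ‖f y - f x - L (y - x)‖ ≤ ‖f y - f z‖ + ‖f (x + t • w) - f z‖
        + ‖f (x + t • w) - f x - t • L w‖ + ‖L (y - (x + t • w))‖ := by
        rw [e]
        refine (norm_sub_le _ _).trans ?_
        gcongr
        refine (norm_add_le _ _).trans ?_
        gcongr
        exact norm_sub_le _ _
    _ ≤ K * (2 * η * t) + K * (η * t) + η * t + ‖L‖ * (η * t) := by gcongr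
    _ = c * t := by rw [← hηM, hM]; ring

lemma freq_bound {F : ℝ → Y} {g : ℝ → ℝ} {a : Y} {b : ℝ}
    (hF : Tendsto F (𝓝 0) (𝓝 a)) (hg : Tendsto g (𝓝 0) (𝓝 b))
    (h : ∃ᶠ s in 𝓝 (0:ℝ), ‖F s‖ ≤ g s) : ‖a‖ ≤ b := by
  by_contra! hc
  have := hg.eventually_lt hF.norm hc
  obtain ⟨s, h1, h2⟩ := (h.and_eventually this).exists
  linarith

lemma lipS_closed {f : X → Y} {K : ℕ} {x : X} {L : X →L[ℝ] Y}
    (hL : GateauxDiffAt f x L) (v : X) (h : ∃ᶠ s in 𝓝 (0:ℝ), x + s • v ∈ LipS f K) :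
    x ∈ LipS f K := by
  intro y hy
  have hc : Tendsto (fun s : ℝ => ‖y - (x + s • v)‖) (𝓝 0) (𝓝 ‖y - x‖) := by
    have : Continuous (fun s : ℝ => ‖y - (x + s • v)‖) := by fun_prop
    simpa using this.tendsto 0
  refine freq_bound ((tendsto_const_nhds (x := f y)).sub (gateaux_cont hL v))
    (hc.const_mul (K:ℝ)) ?_
  refine (h.and_eventually (hc.eventually_lt_const hy)).mono ?_
  rintro s ⟨h1, h2⟩
  exact h1 y h2

lemma coneS_closed {G : Set X} {f : X → Y} (hGat : ∀ x ∈ G, ∃ L : X →L[ℝ] Y, GateauxDiffAt f x L)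
    {m : ℕ} {u : X} {ρ : ℝ} {x : X}
    (v : X) (h : ∃ᶠ s in 𝓝 (0:ℝ), x + s • v ∈ ConeS G f m u ρ) :
    x ∈ ConeS G f m u ρ := by
  obtain ⟨s0, -, hu, hρ, hsub, -⟩ := h.exists
  have hball : ball x (1 / ((m:ℝ) + 1)) ⊆ G := by
    intro y hy
    have hc : Tendsto (fun s : ℝ => dist y (x + s • v)) (𝓝 0) (𝓝 (dist y x)) := by
      have : Continuous (fun s : ℝ => dist y (x + s • v)) := by fun_prop
      simpa using this.tendsto 0
    obtain ⟨s, h1, h2⟩ := (h.and_eventually (hc.eventually_lt_const hy)).exists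
    exact h1.1 h2
  refine ⟨hball, hu, hρ, hsub, fun w hw t ht => ?_⟩
  have hxG : x ∈ G := hball (mem_ball_self (by positivity))
  have hxt : x + t • w ∈ G := by
    apply hball
    have := hsub hw
    rw [mem_ball_zero_iff] at this
    rw [mem_ball, dist_eq_norm, add_sub_cancel_left, norm_smul, Real.norm_eq_abs]
    nlinarith [abs_nonneg t, norm_nonneg w]
  obtain ⟨L1, h1⟩ := hGat _ hxG
  obtain ⟨L2, h2⟩ := hGat _ hxt
  refine freq_bound ((gateaux_cont h2 v).sub (gateaux_cont h1 v))
    (tendsto_const_nhds (x := (m:ℝ) * |t|)) ?_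
  refine h.mono fun s hs => ?_
  have := hs.2.2.2.2 w hw t ht
  rwa [add_right_comm] at this

end

lemma coneS_cover {n : ℕ} [Nontrivial (EuclideanSpace ℝ (Fin n))] {Y : Type*}
    [NormedAddCommGroup Y] [NormedSpace ℝ Y]
    {G : Set (EuclideanSpace ℝ (Fin n))} (hG : IsOpen G)
    {f : EuclideanSpace ℝ (Fin n) → Y}
    (hGat : ∀ x ∈ G, ∃ L : EuclideanSpace ℝ (Fin n) →L[ℝ] Y, GateauxDiffAt f x L)
    {z : EuclideanSpace ℝ (Fin n)} (hz : z ∈ G) :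
    ∃ q : ℕ × ℕ × ℕ, z ∈ ConeS G f q.1 (TopologicalSpace.denseSeq _ q.2.1)
      (1 / ((q.2.2 : ℝ) + 1)) := by
  obtain ⟨R, hR, hRG⟩ := Metric.isOpen_iff.1 hG z hz
  obtain ⟨m0, hm0⟩ := exists_nat_one_div_lt hR
  obtain ⟨L, hL⟩ := hGat z hz
  obtain ⟨m, V, hV, hVne, hVO, hVE⟩ := baire_line
    (fun m : ℕ => {v | ∀ t : ℝ, |t| < 1 / (((m + m0 : ℕ):ℝ) + 1) →
      ‖f (z + t • v) - f z‖ ≤ ((m + m0 : ℕ):ℝ) * |t|})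
    (ball 0 1) isOpen_ball ⟨0, by simp⟩
    (by
      intro v _
      obtain ⟨δ, hδ, hb⟩ := gateaux_bound hL v one_pos
      obtain ⟨m, hm⟩ := exists_nat_ge (max (1 / δ) (‖L v‖ + 1))
      simp only [max_le_iff] at hm
      refine mem_iUnion.2 ⟨m, fun t ht => ?_⟩
      have hmm : (m:ℝ) ≤ ((m + m0 : ℕ):ℝ) := by push_cast; linarith [Nat.cast_nonneg (α := ℝ) m0]
      have htd : |t| < δ := by
        refine ht.trans_le ?_
        rw [div_le_iff₀ (by positivity)]
        have := hm.1
        rw [div_le_iff₀ hδ] at this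
        nlinarith
      have h1 := hb t htd
      have h2 := norm_add_le (f (z + t • v) - f z - t • L v) (t • L v)
      rw [sub_add_cancel, norm_smul, Real.norm_eq_abs] at h2
      nlinarith [abs_nonneg t])
    (by
      intro m v hv w hfr t ht
      have hxt : z + t • v ∈ G := by
        apply hRG
        rw [mem_ball_zero_iff] at hv
        rw [mem_ball, dist_eq_norm, add_sub_cancel_left, norm_smul, Real.norm_eq_abs]
        have : 1 / (((m + m0 : ℕ):ℝ) + 1) ≤ 1 / ((m0:ℝ) + 1) := by
          gcongr
          omega
        nlinarith [abs_nonneg t, norm_nonneg v]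
      obtain ⟨L2, h2⟩ := hGat _ hxt
      refine freq_bound ((gateaux_cont h2 (t • w)).sub (tendsto_const_nhds (x := f z)))
        (tendsto_const_nhds (x := ((m + m0 : ℕ):ℝ) * |t|)) ?_
      refine hfr.mono fun s hs => ?_
      have := hs t ht
      rwa [smul_add, smul_comm t s w, ← add_assoc] at this)
  have hV' : IsOpen (V ∩ {0}ᶜ) := hV.inter isOpen_compl_singleton
  have hV'ne : (V ∩ {0}ᶜ).Nonempty :=
    (dense_compl_singleton (0 : EuclideanSpace ℝ (Fin n))).inter_open_nonempty V hV hVne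
  obtain ⟨k, hk⟩ := (TopologicalSpace.denseRange_denseSeq
    (EuclideanSpace ℝ (Fin n))).exists_mem_open hV' hV'ne
  obtain ⟨r, hr, hrV⟩ := Metric.isOpen_iff.1 hV _ hk.1
  obtain ⟨j, hj⟩ := exists_nat_one_div_lt hr
  have hbV := (ball_subset_ball hj.le).trans hrV
  refine ⟨(m + m0, k, j), ?_, hk.2, by positivity, hbV.trans hVO, fun v hv t ht => hVE (hbV hv) t ht⟩
  refine (ball_subset_ball ?_).trans hRG
  have : 1 / (((m + m0 : ℕ):ℝ) + 1) ≤ 1 / ((m0:ℝ) + 1) := by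
    gcongr
    omega
  exact this.trans hm0.le

end Stmt17Aux

open Stmt17Aux in
theorem stmt17 {n : ℕ} {Y : Type*} [NormedAddCommGroup Y] [NormedSpace ℝ Y] [CompleteSpace Y]
    (G : Set (EuclideanSpace ℝ (Fin n))) (hG : IsOpen G)
    (f : EuclideanSpace ℝ (Fin n) → Y)
    (hGat : ∀ x ∈ G, ∃ L : EuclideanSpace ℝ (Fin n) →L[ℝ] Y, GateauxDiffAt f x L) :
    ∃ A : Set (EuclideanSpace ℝ (Fin n)), IsNowhereDense A ∧ SigmaPorous A ∧
      ∀ x ∈ G \ A, ∃ L : EuclideanSpace ℝ (Fin n) →L[ℝ] Y, HasFDerivAt f L x := by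
  rcases subsingleton_or_nontrivial (EuclideanSpace ℝ (Fin n)) with hsub | hnt
  · refine ⟨∅, by simp [IsNowhereDense], sigma_porous (ι := ℕ) ∅ (fun _ => ∅) (by simp),
      fun x _ => ⟨0, ?_⟩⟩
    exact hasFDerivAt_of_subsingleton f x
  refine ⟨{x | x ∈ G ∧ ¬ ∃ L : EuclideanSpace ℝ (Fin n) →L[ℝ] Y, HasFDerivAt f L x}, ?_, ?_, ?_⟩
  · rw [IsNowhereDense, Set.eq_empty_iff_forall_notMem]
    intro x hx
    obtain ⟨x', hx'1, hx'2⟩ := mem_closure_iff.1 (interior_subset hx) _ isOpen_interior hx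
    obtain ⟨q, V, hV, hVne, hVO, hVE⟩ := baire_line
      (fun q : ℕ × ℕ × ℕ => ConeS G f q.1 (TopologicalSpace.denseSeq _ q.2.1)
        (1 / ((q.2.2 : ℝ) + 1)))
      (G ∩ interior (closure {x | x ∈ G ∧ ¬ ∃ L : EuclideanSpace ℝ (Fin n) →L[ℝ] Y,
        HasFDerivAt f L x})) (hG.inter isOpen_interior) ⟨x', hx'2.1, hx'1⟩
      (fun z hz => mem_iUnion.2 (coneS_cover hG hGat hz.1))
      (fun q z hz v hfr => coneS_closed hGat v hfr)
    obtain ⟨K, W, hW, ⟨w, hw⟩, hWV, hWK⟩ := baire_line (fun K : ℕ => LipS f K) V hV hVne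
      (by
        intro z hz
        exact mem_iUnion.2 (lip_of_coneS (hVE hz)
          (not_porous_interior (interior_maximal hVE hV hz))))
      (by
        intro K z hz v hfr
        obtain ⟨L, hL⟩ := hGat z (hVO hz).1
        exact lipS_closed hL v hfr)
    obtain ⟨y, hyW, hyG, hyn⟩ := mem_closure_iff.1 (interior_subset (hVO (hWV hw)).2) W hW hw
    obtain ⟨L, hL⟩ := hGat y hyG
    exact hyn ⟨L, frechet_of_lipS hL (not_porous_interior (interior_maximal hWK hW hyW))⟩
  · refine sigma_porous (ι := (ℕ × ℕ × ℕ) ⊕ ℕ) _ (Sum.elim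
      (fun q => ConeS G f q.1 (TopologicalSpace.denseSeq _ q.2.1) (1 / ((q.2.2 : ℝ) + 1)))
      (fun K => LipS f K)) ?_
    rintro x ⟨hxG, hxn⟩
    obtain ⟨q, hq⟩ := coneS_cover hG hGat hxG
    by_contra! hc
    obtain ⟨K, hK⟩ := lip_of_coneS hq (hc (Sum.inl q) hq)
    obtain ⟨L, hL⟩ := hGat x hxG
    exact hxn ⟨L, frechet_of_lipS hL (hc (Sum.inr K) hK)⟩
  · rintro x ⟨hxG, hx⟩
    by_contra h
    exact hx ⟨hxG, h⟩
end
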